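/- For every real α with 1 − 2/k₁ < α < 1 there exists a real number k > k₁ such that f(k) < α < 1 − 2/k. -/

import Mathlib

noncomputable def f (k : ℝ) : ℝ :=
  1 - (2 * k * Real.sqrt (k - 1) - 4 * k + 4) / (k - 2) ^ 2

noncomputable def k₁ : ℝ :=
  2 + (2 + Real.sqrt (44 / 27)) ^ ((1 : ℝ) / 3)
    + (2 - Real.sqrt (44 / 27)) ^ ((1 : ℝ) / 3)

/-!
With `s = √(k - 1)` the fraction in `f` cancels to `f k = 1 - 2 * s / (s + 1) ^ 2`, so that
`f k < 1 - 2 / k` means `s ^ 2 + s + 1 < s ^ 3`. Multiplied by the positive conjugate factor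
`s ^ 3 + s ^ 2 - s + 1`, this becomes the cubic inequality `4 * (k - 2) + 4 < (k - 2) ^ 3`, which
holds for `k` beyond its Cardano root `k₁`. Given `α`, the point `k₀ = 2 / (1 - α) > k₁` satisfies
`f k₀ < 1 - 2 / k₀ = α`; moving slightly to the right of `k₀` keeps `f k < α`, by continuity, and
makes `α < 1 - 2 / k` strict.
-/

theorem mul_add_lt_pow_three_of_lt {R : Type*} [CommRing R] [LinearOrder R]
    [IsStrictOrderedRing R] {p q u v : R} (hu : 0 < u) (hq : 0 ≤ q)
    (hroot : u ^ 3 = p * u + q) (huv : u < v) : p * v + q < v ^ 3 := by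
  have hfactor : u * (v ^ 3 - (p * v + q)) = (v - u) * (u * v * (u + v) + q) := by
    linear_combination v * hroot
  have hv : 0 < v := hu.trans huv
  have hprod : 0 < u * (v ^ 3 - (p * v + q)) := by
    rw [hfactor]
    exact mul_pos (sub_pos.2 huv) (by positivity)
  exact sub_pos.1 (pos_of_mul_pos_right hprod hu.le)

theorem rpow_one_third_pow_three {x : ℝ} (hx : 0 ≤ x) : (x ^ ((1 : ℝ) / 3)) ^ 3 = x := by
  simpa only [one_div, Nat.cast_ofNat] using Real.rpow_inv_natCast_pow hx three_ne_zero

theorem rpow_one_third_add_pow_three {x y : ℝ} (hx : 0 ≤ x) (hy : 0 ≤ y) :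
    (x ^ ((1 : ℝ) / 3) + y ^ ((1 : ℝ) / 3)) ^ 3 =
      3 * (x * y) ^ ((1 : ℝ) / 3) * (x ^ ((1 : ℝ) / 3) + y ^ ((1 : ℝ) / 3)) + (x + y) := by
  rw [Real.mul_rpow hx hy]
  linear_combination rpow_one_third_pow_three hx + rpow_one_third_pow_three hy

theorem two_sub_sqrt_forty_four_div_twenty_seven_nonneg : 0 ≤ 2 - √(44 / 27 : ℝ) :=
  sub_nonneg.2 (Real.sqrt_le_iff.2 ⟨zero_le_two, by norm_num⟩)

theorem two_lt_k₁ : 2 < k₁ := by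
  have hminus := two_sub_sqrt_forty_four_div_twenty_seven_nonneg
  rw [k₁, add_assoc]
  exact lt_add_of_pos_right 2 (by positivity)

theorem k₁_sub_two_pow_three : (k₁ - 2) ^ 3 = 4 * (k₁ - 2) + 4 := by
  have hplus : 0 ≤ 2 + √(44 / 27 : ℝ) := by positivity
  have hprod : (2 + √(44 / 27 : ℝ)) * (2 - √(44 / 27)) = (4 / 3) ^ 3 := by
    rw [← sq_sub_sq, Real.sq_sqrt (by norm_num)]
    norm_num
  have hroot : ((4 / 3 : ℝ) ^ 3) ^ ((1 : ℝ) / 3) = 4 / 3 := by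
    simpa only [one_div, Nat.cast_ofNat] using
      Real.pow_rpow_inv_natCast (by norm_num : (0 : ℝ) ≤ 4 / 3) three_ne_zero
  rw [k₁, add_assoc, add_sub_cancel_left, rpow_one_third_add_pow_three hplus
    two_sub_sqrt_forty_four_div_twenty_seven_nonneg, hprod, hroot]
  ring

theorem f_eq_one_sub_div_sqrt_add_one_sq {k : ℝ} (hk : 1 ≤ k) (hk2 : k ≠ 2) :
    f k = 1 - 2 * √(k - 1) / (√(k - 1) + 1) ^ 2 := by
  obtain ⟨s, hs, rfl⟩ : ∃ s : ℝ, 0 ≤ s ∧ s ^ 2 + 1 = k :=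
    ⟨√(k - 1), Real.sqrt_nonneg _, by rw [Real.sq_sqrt (sub_nonneg.2 hk), sub_add_cancel]⟩
  have hs1 : s - 1 ≠ 0 := fun h ↦ hk2 (by rw [sub_eq_zero.1 h]; norm_num)
  have hnum : 2 * (s ^ 2 + 1) * s - 4 * (s ^ 2 + 1) + 4 = (s - 1) ^ 2 * (2 * s) := by ring
  have hden : (s ^ 2 + 1 - 2) ^ 2 = (s - 1) ^ 2 * (s + 1) ^ 2 := by ring
  rw [f, add_sub_cancel_right, Real.sqrt_sq hs, hnum, hden,
    mul_div_mul_left _ _ (pow_ne_zero 2 hs1)]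

theorem add_one_sq_lt_mul_sq_add_one_iff {s : ℝ} (hs : 0 ≤ s) :
    (s + 1) ^ 2 < s * (s ^ 2 + 1) ↔ 4 * (s ^ 2 - 1) + 4 < (s ^ 2 - 1) ^ 3 := by
  have hfactor : (s ^ 2 - 1) ^ 3 - (4 * (s ^ 2 - 1) + 4) =
      (s * (s ^ 2 + 1) - (s + 1) ^ 2) * (s ^ 3 + (s ^ 2 - s + 1)) := by ring
  have hconj : 0 < s ^ 3 + (s ^ 2 - s + 1) :=
    add_pos_of_nonneg_of_pos (pow_nonneg hs 3) (by nlinarith [sq_nonneg (s - 1)])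
  rw [← sub_pos, ← sub_pos (b := 4 * (s ^ 2 - 1) + 4), hfactor, mul_pos_iff_of_pos_right hconj]

theorem f_lt_one_sub_two_div_iff {k : ℝ} (hk : 1 ≤ k) (hk2 : k ≠ 2) :
    f k < 1 - 2 / k ↔ 4 * (k - 2) + 4 < (k - 2) ^ 3 := by
  have hs : √(k - 1) ^ 2 = k - 1 := Real.sq_sqrt (sub_nonneg.2 hk)
  have hcubic : (√(k - 1) + 1) ^ 2 < √(k - 1) * k ↔ 4 * (k - 2) + 4 < (k - 2) ^ 3 := by
    have h := add_one_sq_lt_mul_sq_add_one_iff (Real.sqrt_nonneg (k - 1))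
    rwa [hs, sub_add_cancel, sub_sub, one_add_one_eq_two] at h
  rw [f_eq_one_sub_div_sqrt_add_one_sq hk hk2, sub_lt_sub_iff_left, ← hcubic,
    div_lt_div_iff₀ (by positivity) (by positivity), mul_assoc, mul_lt_mul_iff_right₀ two_pos]

theorem f_lt_one_sub_two_div_of_k₁_lt {k : ℝ} (hk : k₁ < k) : f k < 1 - 2 / k := by
  have hk2 : 2 < k := two_lt_k₁.trans hk
  exact (f_lt_one_sub_two_div_iff (one_le_two.trans hk2.le) hk2.ne').2
    (mul_add_lt_pow_three_of_lt (sub_pos.2 two_lt_k₁) zero_le_four k₁_sub_two_pow_three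
      (sub_lt_sub_right hk 2))

theorem continuousAt_f {k : ℝ} (hk : k ≠ 2) : ContinuousAt f k := by
  have hden : (k - 2) ^ 2 ≠ 0 := pow_ne_zero 2 (sub_ne_zero.2 hk)
  unfold f
  fun_prop (disch := assumption)

theorem stmt8 (α : ℝ) (h1 : 1 - 2 / k₁ < α) (h2 : α < 1) :
    ∃ k : ℝ, k₁ < k ∧ f k < α ∧ α < 1 - 2 / k := by
  have hk₁ : 0 < k₁ := two_pos.trans two_lt_k₁
  have hα : 0 < 1 - α := sub_pos.2 h2
  set k₀ : ℝ := 2 / (1 - α) with hk₀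
  have hk₁k₀ : k₁ < k₀ := by
    rw [hk₀, lt_div_comm₀ hk₁ hα]
    exact sub_lt_comm.1 h1
  have hα_eq : 1 - 2 / k₀ = α := by
    rw [hk₀, div_div_cancel₀ two_ne_zero, sub_sub_cancel]
  have hfk₀ : f k₀ < α := hα_eq ▸ f_lt_one_sub_two_div_of_k₁_lt hk₁k₀
  have hcont : ContinuousAt f k₀ := continuousAt_f (two_lt_k₁.trans hk₁k₀).ne'
  obtain ⟨k, hk₀k, hfk⟩ := (hcont.eventually_lt_const hfk₀).exists_gt
  refine ⟨k, hk₁k₀.trans hk₀k, hfk, ?_⟩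
  calc
    α = 1 - 2 / k₀ := hα_eq.symm
    _ < 1 - 2 / k :=
      sub_lt_sub_left (div_lt_div_of_pos_left two_pos (hk₁.trans hk₁k₀) hk₀k) 1
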